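/- arXiv:0909.2057 — 8 statements merged into one kernel-verified Lean document; each statement's English description precedes it below -/
import Mathlib

section
/- For φ ∈ [0, π], define p_s(φ) = (1 + 2·sin(φ/2) + 2^{3/2}·sin((π−φ)/4)·√(sin(φ/2)))^{−2}, and for nonzero x, y ∈ ℂ let A(x,y) = [[x, (e^{iφ}−1)·x/y], [y/x, 1/x]] ∈ ℂ^{2×2}. Then the supremum over all nonzero x, y ∈ ℂ of σ_max(A(x,y))^{−4}, where σ_max denotes the largest singular value (equivalently the ℓ²→ℓ² operator norm), equals p_s(φ). -/
open Complex Matrix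

/-- The largest singular value of a square complex matrix, i.e. its `ℓ² → ℓ²` operator norm. -/
noncomputable def sigmaMax (A : Matrix (Fin 2) (Fin 2) ℂ) : ℝ :=
  ‖Matrix.toEuclideanCLM (𝕜 := ℂ) (n := Fin 2) A‖

/-- The core matrix of the post-selected controlled phase gate. -/
noncomputable def coreMatrix (φ : ℝ) (x y : ℂ) : Matrix (Fin 2) (Fin 2) ℂ :=
  !![x, (Complex.exp (φ * Complex.I) - 1) * x / y;
     y / x, 1 / x]

/-- The optimal success probability of the post-selected controlled phase gate. -/
noncomputable def pSucc (φ : ℝ) : ℝ :=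
  (1 + 2 * Real.sin (φ / 2) +
    2 ^ ((3 : ℝ) / 2) * Real.sin ((Real.pi - φ) / 4) * Real.sqrt (Real.sin (φ / 2))) ^ (-2 : ℤ)

/-- The squared Frobenius norm of a `2 × 2` matrix. -/
noncomputable def frobeniusSq (A : Matrix (Fin 2) (Fin 2) ℂ) : ℝ :=
  ‖A 0 0‖ ^ 2 + ‖A 0 1‖ ^ 2 + ‖A 1 0‖ ^ 2 + ‖A 1 1‖ ^ 2

lemma sigmaMax_nonneg (A : Matrix (Fin 2) (Fin 2) ℂ) : 0 ≤ sigmaMax A := norm_nonneg _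

lemma norm_toEuclideanCLM_sq (A : Matrix (Fin 2) (Fin 2) ℂ) (v : EuclideanSpace ℂ (Fin 2)) :
    ‖Matrix.toEuclideanCLM (𝕜 := ℂ) (n := Fin 2) A v‖ ^ 2 =
      ‖A 0 0 * v 0 + A 0 1 * v 1‖ ^ 2 + ‖A 1 0 * v 0 + A 1 1 * v 1‖ ^ 2 := by
  rw [EuclideanSpace.norm_sq_eq]
  simp [Matrix.mulVec, dotProduct, Fin.sum_univ_two, Matrix.ofLp_toEuclideanCLM]

lemma sum_norm_sq_le_sigmaMax (A : Matrix (Fin 2) (Fin 2) ℂ) (u v : ℂ) :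
    ‖A 0 0 * u + A 0 1 * v‖ ^ 2 + ‖A 1 0 * u + A 1 1 * v‖ ^ 2 ≤
      sigmaMax A ^ 2 * (‖u‖ ^ 2 + ‖v‖ ^ 2) := by
  have h := (Matrix.toEuclideanCLM (𝕜 := ℂ) (n := Fin 2) A).le_opNorm !₂[u, v]
  have h2 := pow_le_pow_left₀ (norm_nonneg _) h 2
  rw [norm_toEuclideanCLM_sq, mul_pow, EuclideanSpace.norm_sq_eq] at h2
  simpa [Fin.sum_univ_two, sigmaMax] using h2

lemma frobeniusSq_le_two_mul_sigmaMax_sq (A : Matrix (Fin 2) (Fin 2) ℂ) :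
    frobeniusSq A ≤ 2 * sigmaMax A ^ 2 := by
  have h₁ := sum_norm_sq_le_sigmaMax A 1 0
  have h₂ := sum_norm_sq_le_sigmaMax A 0 1
  simp at h₁ h₂
  unfold frobeniusSq
  linarith

/-- The Hermitian Gram entry `q` satisfies `|q|² = p r - |det A|²`. -/
lemma norm_gram_sq (a b c d : ℂ) :
    ‖star a * b + star c * d‖ ^ 2 =
      (‖a‖ ^ 2 + ‖c‖ ^ 2) * (‖b‖ ^ 2 + ‖d‖ ^ 2) - ‖a * d - b * c‖ ^ 2 := by
  simp only [← Complex.normSq_eq_norm_sq, Complex.normSq_apply, Complex.star_def, Complex.add_re,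
    Complex.add_im, Complex.sub_re, Complex.sub_im, Complex.mul_re, Complex.mul_im,
    Complex.conj_re, Complex.conj_im]
  ring

lemma sum_norm_sq_eq (a b c d u v : ℂ) :
    ‖a * u + b * v‖ ^ 2 + ‖c * u + d * v‖ ^ 2 =
      (‖a‖ ^ 2 + ‖c‖ ^ 2) * ‖u‖ ^ 2 + (‖b‖ ^ 2 + ‖d‖ ^ 2) * ‖v‖ ^ 2 +
        2 * ((star a * b + star c * d) * (star u * v)).re := by
  simp only [← Complex.normSq_eq_norm_sq, Complex.normSq_apply, Complex.star_def, Complex.add_re,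
    Complex.add_im, Complex.mul_re, Complex.mul_im, Complex.conj_re, Complex.conj_im]
  ring

lemma charpoly_sigmaMax_sq_nonneg (A : Matrix (Fin 2) (Fin 2) ℂ) :
    0 ≤ (sigmaMax A ^ 2) ^ 2 - frobeniusSq A * sigmaMax A ^ 2 + ‖A.det‖ ^ 2 := by
  set N := sigmaMax A ^ 2
  set q := star (A 0 0) * A 0 1 + star (A 1 0) * A 1 1 with hq
  set α := N - (‖A 0 0‖ ^ 2 + ‖A 1 0‖ ^ 2) with hα
  set β := N - (‖A 0 1‖ ^ 2 + ‖A 1 1‖ ^ 2) with hβ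
  have hgram : ‖q‖ ^ 2 = _ := norm_gram_sq (A 0 0) (A 0 1) (A 1 0) (A 1 1)
  have hform (t s : ℝ) : 0 ≤ α * (t ^ 2 * ‖q‖ ^ 2) + β * s ^ 2 - 2 * (t * s * ‖q‖ ^ 2) := by
    have h := sum_norm_sq_le_sigmaMax A (t * q) s
    rw [sum_norm_sq_eq, ← hq] at h
    have hre : (q * (star (t * q) * s)).re = t * s * ‖q‖ ^ 2 := by
      simp [← Complex.normSq_eq_norm_sq, Complex.normSq_apply]
      ring
    rw [hre] at h
    simp only [norm_mul, Complex.norm_real, mul_pow, Real.norm_eq_abs, sq_abs] at h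
    rw [hα, hβ]
    linarith
  have hα0 : 0 ≤ α := by
    have h := sum_norm_sq_le_sigmaMax A 1 0
    simp at h
    rw [hα]
    linarith
  have hmain : ‖q‖ ^ 2 ≤ α * β := by
    rcases hα0.eq_or_lt with h0 | hpos
    · rw [← h0] at hform ⊢
      by_contra! hlt
      rw [zero_mul] at hlt
      have h := hform ((β + 1) / ‖q‖ ^ 2) 1
      have h' : (β + 1) / ‖q‖ ^ 2 * 1 * ‖q‖ ^ 2 = β + 1 := by
        rw [mul_one, div_mul_cancel₀ _ hlt.ne']
      rw [h'] at h
      have h1 := hform 0 1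
      linarith
    · have h := hform 1 α
      have : 0 ≤ α * (α * β - ‖q‖ ^ 2) := by linarith
      linarith [nonneg_of_mul_nonneg_right this hpos]
  rw [Matrix.det_fin_two]
  unfold frobeniusSq
  rw [hgram, hα, hβ] at hmain
  linarith

lemma sigmaMax_sq_le (A : Matrix (Fin 2) (Fin 2) ℂ) {N : ℝ} (hF : frobeniusSq A ≤ 2 * N)
    (hN : 0 ≤ N ^ 2 - frobeniusSq A * N + ‖A.det‖ ^ 2) : sigmaMax A ^ 2 ≤ N := by
  have hgram := norm_gram_sq (A 0 0) (A 0 1) (A 1 0) (A 1 1)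
  rw [Matrix.det_fin_two] at hN
  unfold frobeniusSq at hF hN
  set q := star (A 0 0) * A 0 1 + star (A 1 0) * A 1 1 with hq
  obtain ⟨α, hα⟩ : ∃ α, α = N - (‖A 0 0‖ ^ 2 + ‖A 1 0‖ ^ 2) := ⟨_, rfl⟩
  obtain ⟨β, hβ⟩ : ∃ β, β = N - (‖A 0 1‖ ^ 2 + ‖A 1 1‖ ^ 2) := ⟨_, rfl⟩
  have hdet : ‖q‖ ^ 2 ≤ α * β := by rw [hgram, hα, hβ]; linarith
  have hsum : 0 ≤ α + β := by linarith
  have hprod : 0 ≤ α * β := (sq_nonneg _).trans hdet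
  have hα0 : 0 ≤ α := by by_contra! h; nlinarith
  have hβ0 : 0 ≤ β := by by_contra! h; nlinarith
  have hN0 : 0 ≤ N := by
    have : 0 ≤ ‖A 0 0‖ ^ 2 + ‖A 1 0‖ ^ 2 := by positivity
    linarith
  have hq_le : ‖q‖ ≤ √α * √β := by
    rw [← Real.sqrt_mul hα0]
    exact Real.le_sqrt_of_sq_le hdet
  refine (Real.le_sqrt (sigmaMax_nonneg A) hN0).1 ?_
  refine ContinuousLinearMap.opNorm_le_bound _ (Real.sqrt_nonneg _) fun v ↦ ?_
  refine le_of_sq_le_sq ?_ (by positivity)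
  rw [norm_toEuclideanCLM_sq, mul_pow, Real.sq_sqrt hN0, EuclideanSpace.norm_sq_eq,
    Fin.sum_univ_two, sum_norm_sq_eq, ← hq]
  have hre : (q * (star (v 0) * v 1)).re ≤ √α * √β * (‖v 0‖ * ‖v 1‖) := by
    refine (Complex.re_le_norm _).trans ?_
    rw [norm_mul, norm_mul, norm_star]
    gcongr
  have hsq := sq_nonneg (√α * ‖v 0‖ - √β * ‖v 1‖)
  have hexp : (√α * ‖v 0‖ - √β * ‖v 1‖) ^ 2 =
      α * ‖v 0‖ ^ 2 + β * ‖v 1‖ ^ 2 - 2 * (√α * √β * (‖v 0‖ * ‖v 1‖)) := by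
    rw [sub_sq, mul_pow, mul_pow, Real.sq_sqrt hα0, Real.sq_sqrt hβ0]
    ring
  rw [hexp, hα, hβ] at hsq
  rw [hα, hβ] at hre
  linarith

lemma norm_exp_sub_one_sq (φ : ℝ) :
    ‖Complex.exp (φ * Complex.I) - 1‖ ^ 2 = 4 * Real.sin (φ / 2) ^ 2 := by
  have h := Real.sin_sq_add_cos_sq φ
  have h2 := Real.sin_sq_eq_half_sub (φ / 2)
  rw [mul_div_cancel₀ φ two_ne_zero] at h2
  simp only [← Complex.normSq_eq_norm_sq, Complex.normSq_apply, Complex.sub_re, Complex.sub_im,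
    Complex.exp_ofReal_mul_I_re, Complex.exp_ofReal_mul_I_im, Complex.one_re, Complex.one_im]
  linarith

lemma norm_det_coreMatrix_sq (φ : ℝ) {x y : ℂ} (hx : x ≠ 0) (hy : y ≠ 0) :
    ‖(coreMatrix φ x y).det‖ ^ 2 = 1 + 8 * Real.sin (φ / 2) ^ 2 := by
  have hdet : (coreMatrix φ x y).det = 2 - Complex.exp (φ * Complex.I) := by
    simp only [coreMatrix, Matrix.det_fin_two_of]
    field_simp
    ring
  have h := Real.sin_sq_add_cos_sq φ
  have h2 := Real.sin_sq_eq_half_sub (φ / 2)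
  rw [mul_div_cancel₀ φ two_ne_zero] at h2
  rw [hdet]
  simp only [← Complex.normSq_eq_norm_sq, Complex.normSq_apply, Complex.sub_re, Complex.sub_im,
    Complex.exp_ofReal_mul_I_re, Complex.exp_ofReal_mul_I_im, Complex.re_ofNat, Complex.im_ofNat]
  linarith

lemma frobeniusSq_coreMatrix (φ : ℝ) (x y : ℂ) :
    frobeniusSq (coreMatrix φ x y) =
      ‖x‖ ^ 2 + 4 * Real.sin (φ / 2) ^ 2 * ‖x‖ ^ 2 / ‖y‖ ^ 2 + ‖y‖ ^ 2 / ‖x‖ ^ 2 +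
        1 / ‖x‖ ^ 2 := by
  simp [frobeniusSq, coreMatrix, div_pow, mul_pow, norm_exp_sub_one_sq]

lemma le_frobeniusSq_coreMatrix (φ : ℝ) {x y : ℂ} (hx : x ≠ 0) (hy : y ≠ 0) :
    2 * (1 + 2 * Real.sin (φ / 2)) ≤ frobeniusSq (coreMatrix φ x y) := by
  rw [frobeniusSq_coreMatrix]
  have hx' : 0 < ‖x‖ := norm_pos_iff.2 hx
  have hy' : 0 < ‖y‖ := norm_pos_iff.2 hy
  set s := Real.sin (φ / 2)
  have h₁ : ‖x‖ ^ 2 + 1 / ‖x‖ ^ 2 = (‖x‖ - 1 / ‖x‖) ^ 2 + 2 := by field_simp; ring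
  have h₂ : 4 * s ^ 2 * ‖x‖ ^ 2 / ‖y‖ ^ 2 + ‖y‖ ^ 2 / ‖x‖ ^ 2 =
      (2 * s * ‖x‖ / ‖y‖ - ‖y‖ / ‖x‖) ^ 2 + 4 * s := by field_simp; ring
  linarith [sq_nonneg (‖x‖ - 1 / ‖x‖), sq_nonneg (2 * s * ‖x‖ / ‖y‖ - ‖y‖ / ‖x‖)]

lemma pSucc_eq {φ : ℝ} (hφ : φ ∈ Set.Icc 0 Real.pi) :
    pSucc φ = (1 + 2 * Real.sin (φ / 2) +
      √((1 + 2 * Real.sin (φ / 2)) ^ 2 - (1 + 8 * Real.sin (φ / 2) ^ 2))) ^ (-2 : ℤ) := by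
  obtain ⟨h0, hpi⟩ := hφ
  have hs : 0 ≤ Real.sin (φ / 2) := Real.sin_nonneg_of_nonneg_of_le_pi (by linarith) (by linarith)
  have ht : 0 ≤ Real.sin ((Real.pi - φ) / 4) :=
    Real.sin_nonneg_of_nonneg_of_le_pi (by linarith) (by linarith)
  have hsq : Real.sin ((Real.pi - φ) / 4) ^ 2 = (1 - Real.sin (φ / 2)) / 2 := by
    rw [Real.sin_sq_eq_half_sub, ← Real.cos_pi_div_two_sub (φ / 2)]
    ring_nf
  have h2 : ((2 : ℝ) ^ ((3 : ℝ) / 2)) ^ 2 = 8 := by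
    rw [← Real.rpow_natCast, ← Real.rpow_mul (by norm_num)]
    norm_num
  have hroot : √((1 + 2 * Real.sin (φ / 2)) ^ 2 - (1 + 8 * Real.sin (φ / 2) ^ 2)) =
      2 ^ ((3 : ℝ) / 2) * Real.sin ((Real.pi - φ) / 4) * √(Real.sin (φ / 2)) := by
    rw [Real.sqrt_eq_iff_eq_sq _ (by positivity), mul_pow, mul_pow, Real.sq_sqrt hs, hsq, h2]
    · ring
    · nlinarith [Real.sin_le_one (φ / 2)]
  rw [pSucc, hroot]

theorem stmt_2 (φ : ℝ) (hφ : φ ∈ Set.Icc 0 Real.pi) :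
    sSup {r : ℝ | ∃ x y : ℂ, x ≠ 0 ∧ y ≠ 0 ∧ r = (sigmaMax (coreMatrix φ x y)) ^ (-4 : ℤ)} =
      pSucc φ := by
  rw [pSucc_eq hφ]
  have hs : 0 ≤ Real.sin (φ / 2) :=
    Real.sin_nonneg_of_nonneg_of_le_pi (by linarith [hφ.1]) (by linarith [hφ.1, hφ.2])
  have hs1 := Real.sin_le_one (φ / 2)
  have hF {x y : ℂ} (hx : x ≠ 0) (hy : y ≠ 0) := le_frobeniusSq_coreMatrix φ hx hy
  have hdet {x y : ℂ} (hx : x ≠ 0) (hy : y ≠ 0) := norm_det_coreMatrix_sq φ hx hy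
  have hsigma (x y : ℂ) : sigmaMax (coreMatrix φ x y) ^ (-4 : ℤ) =
      (sigmaMax (coreMatrix φ x y) ^ 2) ^ (-2 : ℤ) := by
    rw [← zpow_natCast, ← _root_.zpow_mul]
    norm_num
  have hpos {x y : ℂ} (hx : x ≠ 0) (hy : y ≠ 0) :
      1 + 2 * Real.sin (φ / 2) ≤ sigmaMax (coreMatrix φ x y) ^ 2 := by
    linarith [hF hx hy, frobeniusSq_le_two_mul_sigmaMax_sq (coreMatrix φ x y)]
  set s := Real.sin (φ / 2)
  apply csSup_eq_of_forall_le_of_forall_lt_exists_gt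
  · exact ⟨_, 1, 1, one_ne_zero, one_ne_zero, rfl⟩
  · rintro _ ⟨x, y, hx, hy, rfl⟩
    rw [hsigma, _root_.zpow_neg, _root_.zpow_neg]
    have hN := hpos hx hy
    have hchar := charpoly_sigmaMax_sq_nonneg (coreMatrix φ x y)
    rw [hdet hx hy] at hchar
    have hF := hF hx hy
    set N := sigmaMax (coreMatrix φ x y) ^ 2
    have hroot : √((1 + 2 * s) ^ 2 - (1 + 8 * s ^ 2)) ≤ N - (1 + 2 * s) := by
      rw [Real.sqrt_le_left (by linarith)]
      nlinarith [mul_nonneg (sub_nonneg.2 hF) (by linarith : (0 : ℝ) ≤ N)]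
    have hle : 1 + 2 * s + √((1 + 2 * s) ^ 2 - (1 + 8 * s ^ 2)) ≤ N := by linarith
    exact inv_anti₀ (by positivity) (zpow_le_zpow_left₀ (by norm_num) (by positivity) hle)
  · intro w hw
    let g : ℝ → ℝ := fun δ ↦ 1 + 2 * s + δ + √((1 + 2 * s + δ) ^ 2 - (1 + 8 * s ^ 2))
    have hg : ContinuousAt (fun δ ↦ g δ ^ (-2 : ℤ)) 0 := by
      refine ContinuousAt.zpow₀ (by fun_prop) _ (Or.inl ?_)
      simp only [g]
      positivity
    have hev : ∀ᶠ δ in nhdsWithin (0 : ℝ) (Set.Ioi 0), w < g δ ^ (-2 : ℤ) := by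
      refine (hg.eventually_const_lt ?_).filter_mono nhdsWithin_le_nhds
      simpa [g] using hw
    obtain ⟨δ, hδw, hδ⟩ := (hev.and self_mem_nhdsWithin).exists
    have hδ : 0 < δ := hδ
    have hy : ((√(2 * s + 2 * δ) : ℝ) : ℂ) ≠ 0 := by
      rw [Complex.ofReal_ne_zero]
      positivity
    refine ⟨_, ⟨1, (√(2 * s + 2 * δ) : ℝ), one_ne_zero, hy, rfl⟩, hδw.trans_le ?_⟩
    have hN := hpos one_ne_zero hy
    have hFle : frobeniusSq (coreMatrix φ 1 (√(2 * s + 2 * δ) : ℝ)) ≤ 2 * (1 + 2 * s + δ) := by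
      have hfrac : 4 * s ^ 2 / (2 * s + 2 * δ) ≤ 2 * s := by
        rw [div_le_iff₀ (by positivity)]
        nlinarith [mul_nonneg hs hδ.le]
      rw [frobeniusSq_coreMatrix, Complex.norm_real, Real.norm_eq_abs, sq_abs,
        Real.sq_sqrt (by positivity)]
      simp only [norm_one, one_pow, mul_one, div_one]
      linarith
    have hrad : 0 ≤ (1 + 2 * s + δ) ^ 2 - (1 + 8 * s ^ 2) := by nlinarith
    have hroot : g δ ^ 2 - 2 * (1 + 2 * s + δ) * g δ + (1 + 8 * s ^ 2) = 0 := by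
      linear_combination Real.sq_sqrt hrad
    have hg0 : 1 + 2 * s + δ ≤ g δ := le_add_of_nonneg_right (Real.sqrt_nonneg _)
    have hle := sigmaMax_sq_le (coreMatrix φ 1 (√(2 * s + 2 * δ) : ℝ)) (N := g δ)
      (by linarith) (by
        rw [hdet one_ne_zero hy]
        nlinarith [mul_nonneg (sub_nonneg.2 hFle) (by linarith : (0 : ℝ) ≤ g δ)])
    rw [hsigma, _root_.zpow_neg, _root_.zpow_neg]
    have hN0 : 0 < sigmaMax (coreMatrix φ 1 (√(2 * s + 2 * δ) : ℝ)) ^ 2 := by linarith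
    exact inv_anti₀ (by positivity) (zpow_le_zpow_left₀ (by norm_num) hN0.le hle)
end

section
/- Let φ ∈ [0, π]. For nonzero x, y ∈ ℂ and z₁, z₂ ∈ ℂ, define the extended row vectors A'₁ = (x, (e^{iφ}−1)·x/y, z₁) and A'₂ = (y/x, 1/x, z₂) in ℂ³. Then the infimum of ‖A'₁‖²·‖A'₂‖² over all nonzero x, y ∈ ℂ and all z₁, z₂ ∈ ℂ subject to the orthogonality constraint ⟨A'₁, A'₂⟩ = x·conj(y/x) + ((e^{iφ}−1)·x/y)·conj(1/x) + z₁·conj(z₂) = 0 equals (1 + 2·sin(φ/2) + 2^{3/2}·sin((π−φ)/4)·√(sin(φ/2)))². Consequently the optimal success probability p_s(φ) = sup (‖A'₁‖²·‖A'₂‖²)^{−1} over the same constraint set equals (1 + 2·sin(φ/2) + 2^{3/2}·sin((π−φ)/4)·√(sin(φ/2)))^{−2}. -/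
open Complex Matrix

/-- First extended row of the core matrix, as a vector in Euclidean space `ℂ³`. -/
noncomputable def row1 (φ : ℝ) (x y z₁ : ℂ) : EuclideanSpace ℂ (Fin 3) :=
  (WithLp.equiv 2 (Fin 3 → ℂ)).symm ![x, (Complex.exp (φ * Complex.I) - 1) * x / y, z₁]

/-- Second extended row of the core matrix, as a vector in Euclidean space `ℂ³`. -/
noncomputable def row2 (x y z₂ : ℂ) : EuclideanSpace ℂ (Fin 3) :=
  (WithLp.equiv 2 (Fin 3 → ℂ)).symm ![y / x, 1 / x, z₂]

/-- The orthogonality constraint `⟨A'₁, A'₂⟩ = 0` written out explicitly. -/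
noncomputable def orthoConstraint (φ : ℝ) (x y z₁ z₂ : ℂ) : Prop :=
  x * (starRingEnd ℂ) (y / x) +
    ((Complex.exp (φ * Complex.I) - 1) * x / y) * (starRingEnd ℂ) (1 / x) +
    z₁ * (starRingEnd ℂ) z₂ = 0

theorem IsGLB.isLUB_inv_of_pos {S : Set ℝ} {a : ℝ} (hS : IsGLB S a) (hne : S.Nonempty)
    (ha : 0 < a) : IsLUB {r : ℝ | ∃ s ∈ S, r = s⁻¹} a⁻¹ := by
  refine ⟨?_, fun b hb => ?_⟩
  · rintro r ⟨s, hs, rfl⟩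
    exact inv_anti₀ ha (hS.1 hs)
  · obtain ⟨s₀, hs₀⟩ := hne
    have hb₀ : 0 < b :=
      (inv_pos.2 (ha.trans_le (hS.1 hs₀))).trans_le (hb ⟨s₀, hs₀, rfl⟩)
    refine inv_le_of_inv_le₀ hb₀ (hS.2 fun s hs => ?_)
    exact inv_le_of_inv_le₀ (ha.trans_le (hS.1 hs)) (hb ⟨s, hs, rfl⟩)

/-- A weighted Cauchy–Schwarz bound. -/
theorem add_sq_le_mul_add_sq {A B p q m d : ℝ} (hA : 0 ≤ A) (hB : 0 ≤ B) (hm : 0 ≤ m)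
    (hd : 0 ≤ d) (hAB : m ^ 2 ≤ A * B) (hpq : d ^ 2 ≤ p ^ 2 * q ^ 2) :
    (m + d) ^ 2 ≤ (A + p ^ 2) * (B + q ^ 2) := by
  have hcross : 2 * (m * d) ≤ A * q ^ 2 + B * p ^ 2 := by
    refine (sq_le_sq₀ (by positivity) (by positivity)).1 ?_
    have := mul_le_mul hAB hpq (by positivity) (by positivity)
    nlinarith [sq_nonneg (A * q ^ 2 - B * p ^ 2)]
  nlinarith

theorem norm_row1_sq (φ : ℝ) (x y z : ℂ) :
    ‖row1 φ x y z‖ ^ 2 =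
      ‖x‖ ^ 2 + (‖Complex.exp (φ * Complex.I) - 1‖ * ‖x‖ / ‖y‖) ^ 2 + ‖z‖ ^ 2 := by
  simp [row1, EuclideanSpace.norm_sq_eq, Fin.sum_univ_three]

theorem norm_row2_sq (x y z : ℂ) :
    ‖row2 x y z‖ ^ 2 = (‖y‖ / ‖x‖) ^ 2 + (1 / ‖x‖) ^ 2 + ‖z‖ ^ 2 := by
  simp [row2, EuclideanSpace.norm_sq_eq, Fin.sum_univ_three]

theorem norm_ofReal_add_sq {w : ℂ} (hw : ‖w + 1‖ = 1) (t : ℝ) :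
    ‖(t : ℂ) + w‖ ^ 2 = t ^ 2 - t * ‖w‖ ^ 2 + ‖w‖ ^ 2 := by
  have h : ‖w + 1‖ ^ 2 = 1 := by rw [hw]; norm_num
  rw [← normSq_eq_norm_sq, normSq_apply] at h ⊢
  rw [← normSq_eq_norm_sq, normSq_apply]
  simp at h ⊢
  linear_combination t * h

/-- The squared modulus of the inner product of the unextended rows. -/
theorem norm_inner_core_sq {w x y : ℂ} (hw : ‖w + 1‖ = 1) (hx : x ≠ 0) (hy : y ≠ 0) :
    ‖x * (starRingEnd ℂ) (y / x) + (w * x / y) * (starRingEnd ℂ) (1 / x)‖ ^ 2 =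
      ‖y‖ ^ 2 + (‖w‖ / ‖y‖) ^ 2 - ‖w‖ ^ 2 := by
  have hx' : (starRingEnd ℂ) x ≠ 0 := by simpa using hx
  have key : x * (starRingEnd ℂ) (y / x) + (w * x / y) * (starRingEnd ℂ) (1 / x) =
      x / ((starRingEnd ℂ) x * y) * (((‖y‖ ^ 2 : ℝ) : ℂ) + w) := by
    have := Complex.mul_conj' y
    push_cast
    rw [← this]
    simp only [map_div₀, map_one]
    field_simp
  have hnx : ‖x‖ ≠ 0 := by simpa using hx
  have hny : ‖y‖ ≠ 0 := by simpa using hy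
  rw [key, norm_mul, mul_pow, norm_ofReal_add_sq hw, norm_div, norm_mul, RCLike.norm_conj]
  field_simp
  ring

theorem le_norm_row_mul {φ W : ℝ} (hW : ‖Complex.exp (φ * Complex.I) - 1‖ = W) (hW2 : W ≤ 2)
    {x y z₁ z₂ : ℂ} (hx : x ≠ 0) (hy : y ≠ 0) (h : orthoConstraint φ x y z₁ z₂) :
    (1 + W + Real.sqrt (W * (2 - W))) ^ 2 ≤ ‖row1 φ x y z₁‖ ^ 2 * ‖row2 x y z₂‖ ^ 2 := by
  have hW0 : 0 ≤ W := hW ▸ norm_nonneg _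
  have hnx : ‖x‖ ≠ 0 := by simpa using hx
  have hny : ‖y‖ ≠ 0 := by simpa using hy
  have hc := norm_inner_core_sq (w := Complex.exp (φ * Complex.I) - 1)
    (by simp [Complex.norm_exp_ofReal_mul_I]) hx hy
  rw [eq_neg_of_add_eq_zero_left h, norm_neg, norm_mul, RCLike.norm_conj, mul_pow, hW] at hc
  have hamgm : 2 * W ≤ ‖y‖ ^ 2 + (W / ‖y‖) ^ 2 := by
    have := sq_nonneg (‖y‖ - W / ‖y‖)
    have e : ‖y‖ * (W / ‖y‖) = W := by field_simp
    nlinarith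
  rw [norm_row1_sq, norm_row2_sq, hW]
  refine add_sq_le_mul_add_sq (by positivity) (by positivity) (by positivity)
    (Real.sqrt_nonneg _) ?_ ?_
  · have : (‖x‖ ^ 2 + (W * ‖x‖ / ‖y‖) ^ 2) * ((‖y‖ / ‖x‖) ^ 2 + (1 / ‖x‖) ^ 2) =
        ‖y‖ ^ 2 + (W / ‖y‖) ^ 2 + 1 + W ^ 2 := by
      field_simp
      ring
    rw [this]
    linarith
  · rw [Real.sq_sqrt (mul_nonneg hW0 (by linarith)), hc]
    linarith

theorem isGLB_norm_row_mul {φ W : ℝ} (hW : ‖Complex.exp (φ * Complex.I) - 1‖ = W)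
    (hW2 : W ≤ 2) :
    IsGLB {r : ℝ | ∃ x y z₁ z₂ : ℂ, x ≠ 0 ∧ y ≠ 0 ∧ orthoConstraint φ x y z₁ z₂ ∧
        r = ‖row1 φ x y z₁‖ ^ 2 * ‖row2 x y z₂‖ ^ 2}
      ((1 + W + Real.sqrt (W * (2 - W))) ^ 2) := by
  refine ⟨?_, fun b hb => ?_⟩
  · rintro r ⟨x, y, z₁, z₂, hx, hy, h, rfl⟩
    exact le_norm_row_mul hW hW2 hx hy h
  have hW0 : 0 ≤ W := hW ▸ norm_nonneg _
  rcases hW0.eq_or_lt with rfl | hpos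
  · -- for `W = 0` the bound is only approached, along `y → 0`
    have hw : Complex.exp (φ * Complex.I) - 1 = 0 := norm_eq_zero.1 hW
    have hle : ∀ t : ℝ, 0 < t → b ≤ (1 + t ^ 2) * (t ^ 4 + 1 + t ^ 2) := by
      intro t ht
      refine hb ⟨1, (t : ℂ) ^ 2, -t, t, one_ne_zero, by simpa using ht.ne', ?_, ?_⟩
      · simp only [orthoConstraint, hw, map_div₀, map_pow, map_one, conj_ofReal]
        ring
      · rw [norm_row1_sq, norm_row2_sq, hW]
        simp only [norm_one, norm_neg, norm_pow, norm_real, Real.norm_eq_abs, sq_abs]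
        ring
    have hcont : Continuous fun t : ℝ => (1 + t ^ 2) * (t ^ 4 + 1 + t ^ 2) := by fun_prop
    have hlim := (hcont.tendsto 0).mono_left (nhdsWithin_le_nhds (s := Set.Ioi 0))
    have := ge_of_tendsto hlim (Filter.eventually_of_mem self_mem_nhdsWithin hle)
    simpa using this
  · have hs : 0 < Real.sqrt W := Real.sqrt_pos.2 hpos
    have hs2 : Real.sqrt W ^ 2 = W := Real.sq_sqrt hW0
    set y : ℂ := (Real.sqrt W : ℂ) with hy_def
    have hy : y ≠ 0 := by simpa [hy_def] using hs.ne'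
    have hny : ‖y‖ = Real.sqrt W := by simp [hy_def, abs_of_pos hs]
    set w : ℂ := Complex.exp (φ * Complex.I) - 1 with hw_def
    set c : ℂ := 1 * (starRingEnd ℂ) (y / 1) + (w * 1 / y) * (starRingEnd ℂ) (1 / 1) with hc_def
    have hc : ‖c‖ = Real.sqrt (W * (2 - W)) := by
      have := norm_inner_core_sq (w := w) (x := 1)
        (by simp [hw_def, Complex.norm_exp_ofReal_mul_I]) one_ne_zero hy
      rw [← hc_def, hny, hW, div_pow, hs2] at this
      rw [← Real.sqrt_sq (norm_nonneg c), this]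
      congr 1
      field_simp
      ring
    have hr2 : Real.sqrt ‖c‖ ^ 2 = ‖c‖ := Real.sq_sqrt (norm_nonneg c)
    refine hb ⟨1, y, -(c / Real.sqrt ‖c‖), Real.sqrt ‖c‖, one_ne_zero, hy, ?_, ?_⟩
    · change c + -(c / Real.sqrt ‖c‖) * (starRingEnd ℂ) (Real.sqrt ‖c‖ : ℂ) = 0
      rw [conj_ofReal]
      rcases eq_or_ne c 0 with h0 | h0
      · simp [h0]
      · have : (Real.sqrt ‖c‖ : ℂ) ≠ 0 := by
          simpa [Real.sqrt_eq_zero (norm_nonneg c)] using h0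
        field_simp
        ring
    · have hz₂ : ‖(Real.sqrt ‖c‖ : ℂ)‖ = Real.sqrt ‖c‖ := by
        rw [norm_real, Real.norm_of_nonneg (Real.sqrt_nonneg _)]
      have hz₁ : ‖-(c / (Real.sqrt ‖c‖ : ℂ))‖ = Real.sqrt ‖c‖ := by
        rw [norm_neg, norm_div, hz₂, Real.div_sqrt]
      rw [norm_row1_sq, norm_row2_sq, hz₁, hz₂, hr2, hny, hW, norm_one, ← hc, mul_one, div_pow,
        hs2, div_one, hs2]
      field_simp
      ring

theorem stmt_3 (φ : ℝ) (hφ : φ ∈ Set.Icc 0 Real.pi) :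
    sInf {r : ℝ | ∃ x y z₁ z₂ : ℂ, x ≠ 0 ∧ y ≠ 0 ∧ orthoConstraint φ x y z₁ z₂ ∧
        r = ‖row1 φ x y z₁‖ ^ 2 * ‖row2 x y z₂‖ ^ 2} =
      (1 + 2 * Real.sin (φ / 2) +
        2 ^ ((3 : ℝ) / 2) * Real.sin ((Real.pi - φ) / 4) * Real.sqrt (Real.sin (φ / 2))) ^ 2 ∧
    sSup {r : ℝ | ∃ x y z₁ z₂ : ℂ, x ≠ 0 ∧ y ≠ 0 ∧ orthoConstraint φ x y z₁ z₂ ∧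
        r = (‖row1 φ x y z₁‖ ^ 2 * ‖row2 x y z₂‖ ^ 2)⁻¹} =
      (1 + 2 * Real.sin (φ / 2) +
        2 ^ ((3 : ℝ) / 2) * Real.sin ((Real.pi - φ) / 4) * Real.sqrt (Real.sin (φ / 2))) ^ (-2 : ℤ) := by
  obtain ⟨h0, hpi⟩ := hφ
  have hs : 0 ≤ Real.sin (φ / 2) :=
    Real.sin_nonneg_of_nonneg_of_le_pi (by linarith) (by linarith)
  have hs1 := Real.sin_le_one (φ / 2)
  have hW : ‖Complex.exp (φ * Complex.I) - 1‖ = 2 * Real.sin (φ / 2) := by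
    rw [mul_comm, Complex.norm_exp_I_mul_ofReal_sub_one, Real.norm_of_nonneg (by positivity)]
  have hlast : 2 ^ ((3 : ℝ) / 2) * Real.sin ((Real.pi - φ) / 4) * Real.sqrt (Real.sin (φ / 2)) =
      Real.sqrt (2 * Real.sin (φ / 2) * (2 - 2 * Real.sin (φ / 2))) := by
    have hq : 0 ≤ Real.sin ((Real.pi - φ) / 4) :=
      Real.sin_nonneg_of_nonneg_of_le_pi (by linarith) (by linarith)
    have hhalf : Real.sin (φ / 2) = 1 - 2 * Real.sin ((Real.pi - φ) / 4) ^ 2 := by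
      rw [← Real.cos_pi_div_two_sub, show Real.pi / 2 - φ / 2 = 2 * ((Real.pi - φ) / 4) by ring,
        Real.cos_two_mul, Real.cos_sq']
      ring
    have h8 : ((2 : ℝ) ^ ((3 : ℝ) / 2)) ^ 2 = 8 := by
      rw [← Real.rpow_natCast, ← Real.rpow_mul (by norm_num)]
      norm_num
    symm
    rw [Real.sqrt_eq_iff_mul_self_eq (mul_nonneg (by positivity) (by linarith)) (by positivity),
      ← sq, mul_pow, mul_pow, h8, Real.sq_sqrt hs]
    linear_combination -4 * Real.sin (φ / 2) * hhalf
  rw [hlast]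
  have hglb := isGLB_norm_row_mul hW (by linarith)
  set M := 1 + 2 * Real.sin (φ / 2) +
    Real.sqrt (2 * Real.sin (φ / 2) * (2 - 2 * Real.sin (φ / 2)))
  have hM : 0 < M := by positivity
  have hne : {r : ℝ | ∃ x y z₁ z₂ : ℂ, x ≠ 0 ∧ y ≠ 0 ∧ orthoConstraint φ x y z₁ z₂ ∧
      r = ‖row1 φ x y z₁‖ ^ 2 * ‖row2 x y z₂‖ ^ 2}.Nonempty := hglb.nonempty
  refine ⟨hglb.csInf_eq hne, ?_⟩
  have hlub := hglb.isLUB_inv_of_pos hne (by positivity)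
  obtain ⟨s, hs⟩ := hne
  rw [_root_.zpow_neg]
  refine Eq.trans (congrArg sSup ?_) (hlub.csSup_eq ⟨s⁻¹, s, hs, rfl⟩)
  ext r
  constructor
  · rintro ⟨x, y, z₁, z₂, hx, hy, h, rfl⟩
    exact ⟨_, ⟨x, y, z₁, z₂, hx, hy, h, rfl⟩, rfl⟩
  · rintro ⟨_, ⟨x, y, z₁, z₂, hx, hy, h, rfl⟩, rfl⟩
    exact ⟨x, y, z₁, z₂, hx, hy, h, rfl⟩
end

section
/- For φ ∈ [0, π], define p_s(φ) = (1 + 2·sin(φ/2) + 2^{3/2}·sin((π−φ)/4)·√(sin(φ/2)))^{−2}. Then p_s(π/3) = 1/9 = p_s(π), and for every φ with π/3 < φ < π one has p_s(φ) < 1/9. In particular, p_s is not monotone on [0, π]: there exist phases φ < π whose optimal success probability is strictly smaller than that of the π-phase gate. -/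
theorem two_rpow_three_halves : (2 : ℝ) ^ ((3 : ℝ) / 2) = 2 * √2 := by
  rw [show (3 : ℝ) / 2 = 1 + 1 / 2 by norm_num, Real.rpow_add two_pos, Real.rpow_one,
    ← Real.sqrt_eq_rpow]

theorem sin_half_eq_one_sub_two_mul_sin_sq (φ : ℝ) :
    Real.sin (φ / 2) = 1 - 2 * Real.sin ((Real.pi - φ) / 4) ^ 2 := by
  rw [← Real.cos_pi_div_two_sub, show Real.pi / 2 - φ / 2 = 2 * ((Real.pi - φ) / 4) by ring,
    Real.cos_two_mul, Real.cos_sq']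
  ring

theorem stmt_6 :
    pSucc (Real.pi / 3) = 1 / 9 ∧ pSucc Real.pi = 1 / 9 ∧
      ∀ φ : ℝ, Real.pi / 3 < φ → φ < Real.pi → pSucc φ < 1 / 9 := by
  refine ⟨?_, ?_, fun φ h₁ h₂ => ?_⟩
  · have hsqrt : √(2 : ℝ) * √(1 / 2) = 1 := by
      rw [← Real.sqrt_mul zero_le_two]
      norm_num
    have hbase : 1 + 2 * (1 / 2 : ℝ) + 2 * √2 * (1 / 2) * √(1 / 2) = 3 := by
      linear_combination hsqrt
    rw [pSucc, two_rpow_three_halves, show Real.pi / 3 / 2 = Real.pi / 6 by ring,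
      show (Real.pi - Real.pi / 3) / 4 = Real.pi / 6 by ring, Real.sin_pi_div_six, hbase]
    norm_num
  · rw [pSucc, sub_self, zero_div, Real.sin_zero, Real.sin_pi_div_two]
    norm_num
  · have hpos : 0 < Real.sin ((Real.pi - φ) / 4) :=
      Real.sin_pos_of_pos_of_lt_pi (by linarith) (by linarith)
    have hlt : Real.sin ((Real.pi - φ) / 4) < 1 / 2 := by
      rw [← Real.sin_pi_div_six]
      exact Real.sin_lt_sin_of_lt_of_le_pi_div_two (by linarith) (by linarith) (by linarith)
    rw [pSucc, two_rpow_three_halves, sin_half_eq_one_sub_two_mul_sin_sq]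
    set t := Real.sin ((Real.pi - φ) / 4)
    have hsqrt : √2 * t < √(1 - 2 * t ^ 2) := by
      apply Real.lt_sqrt_of_sq_lt
      rw [mul_pow, Real.sq_sqrt zero_le_two]
      nlinarith
    have hmul : √2 * t * (√2 * t) < √2 * t * √(1 - 2 * t ^ 2) :=
      mul_lt_mul_of_pos_left hsqrt (by positivity)
    have hbase : 3 < 1 + 2 * (1 - 2 * t ^ 2) + 2 * √2 * t * √(1 - 2 * t ^ 2) := by
      have h2 : √2 * t * (√2 * t) = 2 * t ^ 2 := by
        rw [← sq, mul_pow, Real.sq_sqrt zero_le_two]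
      linarith
    rw [zpow_neg, one_div]
    apply inv_strictAnti₀ (by norm_num)
    rw [show (2 : ℤ) = (2 : ℕ) by rfl, zpow_natCast]
    nlinarith
end

section
/- For φ ∈ [0, π], define p_s(φ) = (1 + 2·sin(φ/2) + 2^{3/2}·sin((π−φ)/4)·√(sin(φ/2)))^{−2}. Then there exists φ* ∈ (2, 2.1) such that p_s(φ*) ≤ p_s(φ) for all φ ∈ [0, π]; i.e., the worst (minimal) success probability on [0, π] is attained at a phase strictly between 2 and 2.1, and in particular not at φ = π. -/
/-- With `c = √(sin (φ / 2))` and `u = √2 * sin ((π - φ) / 4)`, the pair `(c, u)` lies on the unit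
circle in the first quadrant, and `pSucc φ` is a quadratic form in it to the power `-2`. -/
theorem exists_pSucc_eq {φ : ℝ} (hφ : φ ∈ Set.Icc (0 : ℝ) Real.pi) :
    ∃ c u : ℝ, 0 ≤ c ∧ 0 ≤ u ∧ c ^ 2 = Real.sin (φ / 2) ∧ c ^ 2 + u ^ 2 = 1 ∧
      pSucc φ = (1 + 2 * c ^ 2 + 2 * (u * c)) ^ (-2 : ℤ) := by
  obtain ⟨h0, hpi⟩ := hφ
  have hs : 0 ≤ Real.sin (φ / 2) := Real.sin_nonneg_of_nonneg_of_le_pi (by linarith) (by linarith)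
  have ht : 0 ≤ Real.sin ((Real.pi - φ) / 4) :=
    Real.sin_nonneg_of_nonneg_of_le_pi (by linarith) (by linarith)
  have hc : √(Real.sin (φ / 2)) ^ 2 = Real.sin (φ / 2) := Real.sq_sqrt hs
  have hdouble : Real.sin (φ / 2) = 1 - 2 * Real.sin ((Real.pi - φ) / 4) ^ 2 := by
    rw [← Real.cos_pi_div_two_sub,
      show Real.pi / 2 - φ / 2 = 2 * ((Real.pi - φ) / 4) by ring, Real.cos_two_mul, Real.cos_sq']
    ring
  refine ⟨√(Real.sin (φ / 2)), √2 * Real.sin ((Real.pi - φ) / 4), Real.sqrt_nonneg _,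
    mul_nonneg (Real.sqrt_nonneg _) ht, hc, ?_, ?_⟩
  · rw [hc, mul_pow, Real.sq_sqrt zero_le_two]
    linarith
  · rw [pSucc, two_rpow_three_halves, hc]
    ring_nf

theorem one_add_quadratic_le {c u : ℝ} (h : c ^ 2 + u ^ 2 = 1) :
    1 + 2 * c ^ 2 + 2 * (u * c) ≤ 2 + √2 := by
  have hsq : (c ^ 2 - u ^ 2 + 2 * (u * c)) ^ 2 ≤ 2 := by
    have hone : (c ^ 2 + u ^ 2) ^ 2 = 1 := by rw [h, one_pow]
    nlinarith [sq_nonneg (c ^ 2 - u ^ 2 - 2 * (u * c))]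
  linarith [Real.le_sqrt_of_sq_le hsq]

theorem pSucc_ge {φ : ℝ} (hφ : φ ∈ Set.Icc (0 : ℝ) Real.pi) :
    (2 + √2) ^ (-2 : ℤ) ≤ pSucc φ := by
  obtain ⟨c, u, hc, hu, -, hcu, hp⟩ := exists_pSucc_eq hφ
  rw [hp, zpow_neg, zpow_neg, zpow_ofNat, zpow_ofNat]
  have hle := one_add_quadratic_le hcu
  have hpos : 0 < 1 + 2 * c ^ 2 + 2 * (u * c) := by positivity
  gcongr

theorem pSucc_eq_of_sin_half_eq {φ : ℝ} (hφ : φ ∈ Set.Icc (0 : ℝ) Real.pi)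
    (hsin : Real.sin (φ / 2) = (2 + √2) / 4) : pSucc φ = (2 + √2) ^ (-2 : ℤ) := by
  obtain ⟨c, u, hc, hu, hcs, hcu, hp⟩ := exists_pSucc_eq hφ
  have h2 : √2 ^ 2 = 2 := Real.sq_sqrt zero_le_two
  have huc : u * c = √2 / 4 := by
    rw [← sq_eq_sq₀ (mul_nonneg hu hc) (by positivity), mul_pow, hcs, hsin,
      show u ^ 2 = (2 - √2) / 4 by linarith]
    linear_combination (-1 / 8 : ℝ) * h2
  rw [hp, huc, hcs, hsin]
  ring_nf

theorem sin_one_lt : Real.sin 1 < 0.85 := by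
  have hs := (abs_le.mp (Real.sin_bound (x := 1 / 2) (by norm_num [abs_of_pos]))).2
  have hc := (abs_le.mp (Real.cos_bound (x := 1 / 2) (by norm_num [abs_of_pos]))).2
  have hs0 : 0 < Real.sin (1 / 2) := Real.sin_pos_of_pos_of_le_one (by norm_num) (by norm_num)
  rw [abs_of_pos (by norm_num : (0 : ℝ) < 1 / 2)] at hs hc
  rw [show (1 : ℝ) = 2 * (1 / 2) by norm_num, Real.sin_two_mul]
  norm_num at hs hc hs0 ⊢
  nlinarith

theorem lt_sin_of_pi_div_three_le {x : ℝ} (h₁ : Real.pi / 3 ≤ x) (h₂ : x ≤ Real.pi / 2) :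
    0.86 < Real.sin x := by
  have hmono := Real.sin_le_sin_of_le_of_le_pi_div_two (by linarith [Real.pi_pos]) h₂ h₁
  rw [Real.sin_pi_div_three] at hmono
  have h3 : (1.72 : ℝ) < √3 := Real.lt_sqrt_of_sq_lt (by norm_num)
  linarith

theorem stmt_7 :
    ∃ φstar ∈ Set.Ioo (2 : ℝ) 2.1,
      ∀ φ ∈ Set.Icc (0 : ℝ) Real.pi, pSucc φstar ≤ pSucc φ := by
  have hlo : (1.41 : ℝ) < √2 := Real.lt_sqrt_of_sq_lt (by norm_num)
  have hhi : √2 < 1.42 := (Real.sqrt_lt' (by norm_num)).mpr (by norm_num)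
  have hπ := Real.pi_gt_d2
  have hπ' := Real.pi_lt_d2
  have hx₁ : 1 < Real.arcsin ((2 + √2) / 4) :=
    (Real.lt_arcsin_iff_sin_lt ⟨by linarith, by linarith⟩ ⟨by linarith, by linarith⟩).mpr
      (by linarith [sin_one_lt])
  have hx₂ : Real.arcsin ((2 + √2) / 4) < 1.05 :=
    (Real.arcsin_lt_iff_lt_sin ⟨by linarith, by linarith⟩ ⟨by linarith, by linarith⟩).mpr
      (by linarith [lt_sin_of_pi_div_three_le (x := 1.05) (by linarith) (by linarith)])
  refine ⟨2 * Real.arcsin ((2 + √2) / 4), ⟨by linarith, by linarith⟩, fun φ hφ => ?_⟩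
  rw [pSucc_eq_of_sin_half_eq ⟨by linarith, by linarith⟩]
  · exact pSucc_ge hφ
  · rw [mul_div_cancel_left₀ _ two_ne_zero, Real.sin_arcsin (by linarith) (by linarith)]
end

section
/- Let φ ∈ [0, π] and let w = e^{i(φ+π)/4}·√(2·sin(φ/2)) ∈ ℂ (so that w² = e^{iφ} − 1). Consider the 2×2 complex matrix A = [[1, −w], [−w, 1]]. Then the eigenvalues of A†A (i.e., the squared singular values of A) are σ±² = 1 + 2·sin(φ/2) ± 2·(2 − 2·cos φ)^{1/4}·cos((φ+π)/4). -/
open Complex Matrix Polynomial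

/-- The squared singular values of `!![1, -w; -w, 1]` are `1 + ‖w‖² ± 2 Re w`. -/
lemma charpoly_conjTranspose_mul_self_one_neg (w : ℂ) :
    ((!![1, -w; -w, 1] : Matrix (Fin 2) (Fin 2) ℂ)ᴴ * !![1, -w; -w, 1]).charpoly =
      (X - C ((1 + normSq w + 2 * w.re : ℝ) : ℂ)) *
        (X - C ((1 + normSq w - 2 * w.re : ℝ) : ℂ)) := by
  have htrace : ((!![1, -w; -w, 1] : Matrix (Fin 2) (Fin 2) ℂ)ᴴ * !![1, -w; -w, 1]).trace =
      ((1 + normSq w + 2 * w.re : ℝ) : ℂ) + ((1 + normSq w - 2 * w.re : ℝ) : ℂ) := by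
    simp [Matrix.trace_fin_two, Matrix.mul_apply, Fin.sum_univ_two, normSq_eq_conj_mul_self]
    ring
  have hdet : ((!![1, -w; -w, 1] : Matrix (Fin 2) (Fin 2) ℂ)ᴴ * !![1, -w; -w, 1]).det =
      ((1 + normSq w + 2 * w.re : ℝ) : ℂ) * ((1 + normSq w - 2 * w.re : ℝ) : ℂ) := by
    simp [Matrix.det_fin_two, normSq_eq_conj_mul_self, re_eq_add_conj]
    ring
  rw [Matrix.charpoly_fin_two, htrace, hdet, C_add, C_mul]
  ring

lemma two_sub_two_mul_cos_rpow_quarter {φ : ℝ} (h : 0 ≤ Real.sin (φ / 2)) :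
    (2 - 2 * Real.cos φ) ^ ((1 : ℝ) / 4) = √(2 * Real.sin (φ / 2)) := by
  have hsq : 2 - 2 * Real.cos φ = (2 * Real.sin (φ / 2)) ^ (2 : ℝ) := by
    have hcos : Real.cos φ = 1 - 2 * Real.sin (φ / 2) ^ 2 := by
      rw [← Real.cos_two_mul_eq_one_sub, mul_div_cancel₀ φ two_ne_zero]
    rw [hcos, Real.rpow_two]
    ring
  rw [hsq, ← Real.rpow_mul (by positivity), Real.sqrt_eq_rpow]
  norm_num

theorem stmt_9 (φ : ℝ) (hφ : φ ∈ Set.Icc 0 Real.pi)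
    (w : ℂ) (hw : w = Complex.exp (((φ + Real.pi) / 4 : ℝ) * Complex.I) *
      (Real.sqrt (2 * Real.sin (φ / 2)) : ℝ))
    (A : Matrix (Fin 2) (Fin 2) ℂ) (hA : A = !![1, -w; -w, 1])
    (σsqP σsqM : ℝ)
    (hP : σsqP = 1 + 2 * Real.sin (φ / 2) +
      2 * (2 - 2 * Real.cos φ) ^ ((1 : ℝ) / 4) * Real.cos ((φ + Real.pi) / 4))
    (hM : σsqM = 1 + 2 * Real.sin (φ / 2) -
      2 * (2 - 2 * Real.cos φ) ^ ((1 : ℝ) / 4) * Real.cos ((φ + Real.pi) / 4)) :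
    (Aᴴ * A).charpoly = (X - C (σsqP : ℂ)) * (X - C (σsqM : ℂ)) := by
  have hsin : 0 ≤ Real.sin (φ / 2) :=
    Real.sin_nonneg_of_nonneg_of_le_pi (by linarith [hφ.1]) (by linarith [hφ.1, hφ.2])
  have hnorm : normSq w = 2 * Real.sin (φ / 2) := by
    rw [hw, normSq_mul, normSq_ofReal, Real.mul_self_sqrt (by positivity),
      normSq_eq_norm_sq, norm_exp_ofReal_mul_I]
    ring
  have hre : w.re = Real.cos ((φ + Real.pi) / 4) * √(2 * Real.sin (φ / 2)) := by
    rw [hw, re_mul_ofReal, exp_ofReal_mul_I_re]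
  have hplus : σsqP = 1 + normSq w + 2 * w.re := by
    rw [hP, hnorm, hre, two_sub_two_mul_cos_rpow_quarter hsin]
    ring
  have hminus : σsqM = 1 + normSq w - 2 * w.re := by
    rw [hM, hnorm, hre, two_sub_two_mul_cos_rpow_quarter hsin]
    ring
  rw [hA, hplus, hminus, charpoly_conjTranspose_mul_self_one_neg]
end

section
/- Let θ ∈ ℝ with sin θ ≠ 0, and consider the real beam-splitter matrix B = [[sin θ, cos θ], [−cos θ, sin θ]], whose permanent is per(B) = sin²θ − cos²θ. Suppose φ ∈ ℝ is such that per(B) = e^{iφ}·sin²θ (the condition for the post-selected action of the single beam splitter to be a controlled phase gate of phase φ). Then e^{iφ} ∈ {1, −1}; moreover e^{iφ} = 1 holds if and only if sin²θ = 1, and e^{iφ} = −1 holds if and only if sin²θ = 1/3. Hence a single real beam splitter can only implement the controlled phases φ = 0 and φ = π, the latter exactly at reflectivity sin²θ = 1/3. -/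
open Complex Matrix

theorem stmt_11 (θ φ : ℝ) (hθ : Real.sin θ ≠ 0)
    (B : Matrix (Fin 2) (Fin 2) ℂ)
    (hB : B = !![(Real.sin θ : ℂ), (Real.cos θ : ℂ);
                 -(Real.cos θ : ℂ), (Real.sin θ : ℂ)])
    (hgate : B 0 0 * B 1 1 + B 0 1 * B 1 0 =
      Complex.exp (φ * Complex.I) * (B 0 0 * B 1 1)) :
    (Complex.exp (φ * Complex.I) = 1 ∨ Complex.exp (φ * Complex.I) = -1) ∧
      (Complex.exp (φ * Complex.I) = 1 ↔ Real.sin θ ^ 2 = 1) ∧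
      (Complex.exp (φ * Complex.I) = -1 ↔ Real.sin θ ^ 2 = 1 / 3) := by
  simp only [hB, of_apply, cons_val', cons_val_zero, cons_val_one, cons_val_fin_one] at hgate
  have hs : Real.sin θ ^ 2 ≠ 0 := pow_ne_zero 2 hθ
  obtain ⟨r, hr⟩ : ∃ r : ℝ, Complex.exp (φ * Complex.I) = r := by
    refine ⟨(Real.sin θ ^ 2 - Real.cos θ ^ 2) / Real.sin θ ^ 2, ?_⟩
    have hs' : (Real.sin θ : ℂ) ^ 2 ≠ 0 := by exact_mod_cast hs
    simp only [ofReal_div, ofReal_sub, ofReal_pow]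
    rw [eq_div_iff hs']
    linear_combination -hgate
  have habs : |r| = 1 := by
    rw [← Real.norm_eq_abs, ← Complex.norm_real, ← hr, Complex.norm_exp_ofReal_mul_I]
  have hgate' : 2 * Real.sin θ ^ 2 - 1 = r * Real.sin θ ^ 2 := by
    rw [hr] at hgate
    norm_cast at hgate
    linear_combination hgate + Real.sin_sq_add_cos_sq θ
  have hneg : (r : ℂ) = -1 ↔ r = -1 := by
    rw [← ofReal_one, ← ofReal_neg, ofReal_inj]
  rw [hr, ofReal_eq_one, hneg]
  refine ⟨eq_or_eq_neg_of_abs_eq habs, ⟨fun h => ?_, fun h => ?_⟩, fun h => ?_, fun h => ?_⟩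
  · rw [h] at hgate'
    linarith
  · rw [h] at hgate'
    linarith
  · rw [h] at hgate'
    linarith
  · rw [h] at hgate'
    linarith
end

section
/- Let m ≥ 4 and let M̃ ∈ ℂ^{m×m} be the symmetric matrix with M̃₁₃ = M̃₃₁ = 1/2 and all other entries zero (representing two single photons, one in mode 1 and one in mode 3). Let U ∈ ℂ^{m×m} be any unitary matrix, and let M' = Uᵀ·M̃·U. Then for every choice of four indices i₁ < i₂ < i₃ < i₄ in {1, …, m} and every nonzero c ∈ ℂ, the 4×4 principal submatrix of M' on the rows and columns i₁, i₂, i₃, i₄ is not equal to c·N, where N ∈ ℂ^{4×4} is the symmetric matrix with N₁₃ = N₃₁ = N₂₄ = N₄₂ = 1/2 and all other entries zero (representing a dual-rail EPR pair). In particular, since rank M̃ = 2 while rank N = 4, no linear optical network with auxiliary vacuum modes post-selected on the vacuum can transform two single photons into an EPR pair. -/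
open Matrix

/-- A matrix supported, with equal values, on `(a, b)` and `(b, a)` has rank at most two. -/
lemma rank_of_ite_pair_le_two {n : Type*} [Fintype n] [DecidableEq n] (a b : n) (hab : a ≠ b)
    (z : ℂ) :
    (Matrix.of fun i j : n => if (i = a ∧ j = b) ∨ (i = b ∧ j = a) then z else 0).rank ≤ 2 := by
  have h : (Matrix.of fun i j : n => if (i = a ∧ j = b) ∨ (i = b ∧ j = a) then z else 0) =
      (Matrix.of fun (i : n) (k : Fin 2) => if i = ![a, b] k then z else 0) *
        (Matrix.of fun (k : Fin 2) (j : n) => if j = ![b, a] k then (1 : ℂ) else 0) := by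
    ext i j
    simp only [of_apply, Matrix.mul_apply, Fin.sum_univ_two, cons_val_zero, cons_val_one]
    grind
  rw [h]
  exact (rank_mul_le_left _ _).trans ((rank_le_card_width _).trans_eq (Fintype.card_fin 2))

/-- A principal submatrix of a congruent matrix has rank at most that of the original matrix. -/
lemma rank_submatrix_transpose_mul_mul_le {n k : Type*} [Fintype n] [Fintype k]
    (A U : Matrix n n ℂ) (f : k → n) : ((Uᵀ * A * U).submatrix f f).rank ≤ A.rank := by
  have h : (Uᵀ * A * U).submatrix f f = (U.submatrix id f)ᵀ * A * U.submatrix id f := by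
    ext i j
    simp [Matrix.mul_apply]
  rw [h]
  exact (rank_mul_le_left _ _).trans (rank_mul_le_right _ _)

/-- Nonzero multiples of the dual-rail EPR matrix have full rank. -/
lemma rank_smul_epr (c : ℂ) (hc : c ≠ 0) :
    (c • (!![0, 0, 1/2, 0; 0, 0, 0, 1/2; 1/2, 0, 0, 0; 0, 1/2, 0, 0] :
      Matrix (Fin 4) (Fin 4) ℂ)).rank = 4 := by
  set N : Matrix (Fin 4) (Fin 4) ℂ :=
    !![0, 0, 1/2, 0; 0, 0, 0, 1/2; 1/2, 0, 0, 0; 0, 1/2, 0, 0] with hN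
  have hNN : N * N = (1 / 4 : ℂ) • 1 := by
    ext i j
    fin_cases i <;> fin_cases j <;> simp [hN, Matrix.mul_apply, Fin.sum_univ_four] <;> norm_num
  have h : (c • N) * ((4 / c) • N) = 1 := by
    rw [smul_mul_smul_comm, hNN, smul_smul, mul_div_cancel₀ _ hc]
    norm_num
  simpa using rank_of_isUnit _ (IsUnit.of_mul_eq_one _ h)

theorem stmt_13 (m : ℕ) (hm : 4 ≤ m)
    (Mt : Matrix (Fin m) (Fin m) ℂ)
    (hMt : Mt = Matrix.of fun i j : Fin m =>
      if (i = (⟨0, by omega⟩ : Fin m) ∧ j = (⟨2, by omega⟩ : Fin m)) ∨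
         (i = (⟨2, by omega⟩ : Fin m) ∧ j = (⟨0, by omega⟩ : Fin m)) then (1 / 2 : ℂ) else 0)
    (U : Matrix (Fin m) (Fin m) ℂ) (hU : U ∈ Matrix.unitaryGroup (Fin m) ℂ)
    (M' : Matrix (Fin m) (Fin m) ℂ) (hM' : M' = Uᵀ * Mt * U)
    (N : Matrix (Fin 4) (Fin 4) ℂ)
    (hN : N = !![0, 0, 1/2, 0; 0, 0, 0, 1/2; 1/2, 0, 0, 0; 0, 1/2, 0, 0]) :
    ∀ idx : Fin 4 → Fin m, StrictMono idx →
      ∀ c : ℂ, c ≠ 0 → M'.submatrix idx idx ≠ c • N := by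
  intro idx _ c hc h
  have hsub : (M'.submatrix idx idx).rank ≤ Mt.rank := by
    rw [hM']
    exact rank_submatrix_transpose_mul_mul_le Mt U idx
  have hrank : Mt.rank ≤ 2 := by
    rw [hMt]
    exact rank_of_ite_pair_le_two _ _ (by simp) _
  rw [h, hN, rank_smul_epr c hc] at hsub
  omega
end

section
/- For nonzero real x, y, let A(x,y) = [[1, −2/(x·y), 0], [0, 1, y], [x, 0, 1]] ∈ ℝ^{3×3} (this is the generalised Toffoli core for phase φ = π, since e^{iπ}−1 = −2). Then the supremum over all nonzero real x, y of σ_max(A(x,y))^{−6}, where σ_max denotes the largest singular value (the ℓ²→ℓ² operator norm), equals 1 + 3·(2^{1/3} − 2^{2/3}) ≈ 1/57. That is, the optimal success probability of the post-selected Toffoli (controlled-controlled-Z) gate within this class is p_s(π) = 1 + 3·(2^{1/3} − 2^{2/3}). -/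
open Matrix

/-- The largest singular value of a square real matrix, i.e. its `ℓ² → ℓ²` operator norm. -/
noncomputable def sigmaMax3 (A : Matrix (Fin 3) (Fin 3) ℝ) : ℝ :=
  ‖Matrix.toEuclideanCLM (𝕜 := ℝ) (n := Fin 3) A‖

/-- The generalised Toffoli core matrix for phase `π`. -/
noncomputable def toffoliCore (x y : ℝ) : Matrix (Fin 3) (Fin 3) ℝ :=
  !![1, -2 / (x * y), 0;
     0, 1, y;
     x, 0, 1]

theorem norm_sq_toffoliCore_apply (x y : ℝ) (v : EuclideanSpace ℝ (Fin 3)) :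
    ‖Matrix.toEuclideanCLM (𝕜 := ℝ) (n := Fin 3) (toffoliCore x y) v‖ ^ 2 =
      (v 0 + -2 / (x * y) * v 1) ^ 2 + (v 1 + y * v 2) ^ 2 + (x * v 0 + v 2) ^ 2 := by
  rw [EuclideanSpace.real_norm_sq_eq, Fin.sum_univ_three]
  simp [toffoliCore, Matrix.ofLp_toEuclideanCLM, Matrix.mulVec, dotProduct, Fin.sum_univ_three]

theorem toffoliCore_quadratic_le (x y p q r : ℝ) :
    (p + -2 / (x * y) * q) ^ 2 + (q + y * r) ^ 2 + (x * p + r) ^ 2 ≤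
      sigmaMax3 (toffoliCore x y) ^ 2 * (p ^ 2 + q ^ 2 + r ^ 2) := by
  have h := (Matrix.toEuclideanCLM (𝕜 := ℝ) (n := Fin 3) (toffoliCore x y)).le_opNorm !₂[p, q, r]
  have h2 := pow_le_pow_left₀ (norm_nonneg _) h 2
  rw [mul_pow, norm_sq_toffoliCore_apply, EuclideanSpace.real_norm_sq_eq,
    Fin.sum_univ_three] at h2
  simpa [sigmaMax3] using h2

/-- The arithmetic-geometric mean inequality for three numbers of product `c ^ 3`. -/
theorem three_mul_le_add_of_mul_eq_cube {a b d c : ℝ} (ha : 0 ≤ a) (hb : 0 ≤ b) (hd : 0 ≤ d)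
    (h : a * b * d = c ^ 3) : 3 * c ≤ a + b + d := by
  have key : (3 * c) ^ 3 ≤ (a + b + d) ^ 3 := by
    nlinarith [mul_nonneg ha (sq_nonneg (b - d)), mul_nonneg hb (sq_nonneg (a - d)),
      mul_nonneg hd (sq_nonneg (a - b)), mul_nonneg ha (sq_nonneg (a - b)),
      mul_nonneg ha (sq_nonneg (a - d)), mul_nonneg hb (sq_nonneg (b - a)),
      mul_nonneg hb (sq_nonneg (b - d)), mul_nonneg hd (sq_nonneg (d - a)),
      mul_nonneg hd (sq_nonneg (d - b))]
  exact le_of_pow_le_pow_left₀ three_ne_zero (by positivity) key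

theorem le_sigmaMax3_toffoliCore_sq {c x y : ℝ} (hc : 0 < c) (hc3 : c ^ 3 = 2)
    (hx : x ≠ 0) (hy : y ≠ 0) : 1 + c + c ^ 2 ≤ sigmaMax3 (toffoliCore x y) ^ 2 := by
  have habs : |-2 / (x * y)| * |y| * |x| = c ^ 3 := by
    rw [← abs_mul, ← abs_mul, hc3, show -2 / (x * y) * y * x = -2 by field_simp]
    norm_num
  have hQ := toffoliCore_quadratic_le x y
  generalize -2 / (x * y) = a at habs hQ
  generalize sigmaMax3 (toffoliCore x y) ^ 2 = M at hQ ⊢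
  have hsum := three_mul_le_add_of_mul_eq_cube (abs_nonneg a) (abs_nonneg y) (abs_nonneg x) habs
  have ha : 2 + x ^ 2 + a ^ 2 + 2 * |a| ≤ 2 * M := by
    rcases abs_cases a with ⟨h, -⟩ | ⟨h, -⟩ <;> rw [h] <;>
      linarith [hQ 1 1 0, hQ 1 (-1) 0]
  have hy' : 2 + a ^ 2 + y ^ 2 + 2 * |y| ≤ 2 * M := by
    rcases abs_cases y with ⟨h, -⟩ | ⟨h, -⟩ <;> rw [h] <;>
      linarith [hQ 0 1 1, hQ 0 1 (-1)]
  have hx' : 2 + x ^ 2 + y ^ 2 + 2 * |x| ≤ 2 * M := by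
    rcases abs_cases x with ⟨h, -⟩ | ⟨h, -⟩ <;> rw [h] <;>
      linarith [hQ 1 0 1, hQ 1 0 (-1)]
  nlinarith [sq_nonneg (|a| - c), sq_nonneg (|y| - c), sq_nonneg (|x| - c),
    sq_abs a, sq_abs x, sq_abs y, mul_le_mul_of_nonneg_left hsum hc.le]

theorem sigmaMax3_toffoliCore_neg_sq_le {c : ℝ} (hc : 0 < c) (hc3 : c ^ 3 = 2) :
    sigmaMax3 (toffoliCore (-c) (-c)) ^ 2 ≤ 1 + c + c ^ 2 := by
  have hM : 0 ≤ 1 + c + c ^ 2 := by positivity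
  have ha : -2 / (-c * -c) = -c := by
    rw [← hc3]
    field_simp
  rw [sigmaMax3, ← Real.le_sqrt (norm_nonneg _) hM]
  refine ContinuousLinearMap.opNorm_le_bound _ (Real.sqrt_nonneg _) fun v => ?_
  refine le_of_pow_le_pow_left₀ two_ne_zero (by positivity) ?_
  rw [mul_pow, Real.sq_sqrt hM, norm_sq_toffoliCore_apply, ha, EuclideanSpace.real_norm_sq_eq,
    Fin.sum_univ_three]
  linarith [mul_nonneg hc.le (sq_nonneg (v 0 + v 1 + v 2))]

theorem inv_one_add_add_sq_pow_three {c : ℝ} (hc3 : c ^ 3 = 2) :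
    ((1 + c + c ^ 2) ^ 3)⁻¹ = 1 + 3 * (c - c ^ 2) := by
  have h : (c - 1) * (1 + c + c ^ 2) = 1 := by linear_combination hc3
  have h3 : 1 + 3 * (c - c ^ 2) = (c - 1) ^ 3 := by linear_combination -hc3
  rw [h3]
  refine inv_eq_of_mul_eq_one_left ?_
  rw [← mul_pow, h, one_pow]

theorem stmt_15 :
    sSup {r : ℝ | ∃ x y : ℝ, x ≠ 0 ∧ y ≠ 0 ∧
        r = (sigmaMax3 (toffoliCore x y)) ^ (-6 : ℤ)} =
      1 + 3 * ((2 : ℝ) ^ ((1 : ℝ) / 3) - (2 : ℝ) ^ ((2 : ℝ) / 3)) := by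
  obtain ⟨c, hc_def⟩ : ∃ c : ℝ, c = (2 : ℝ) ^ ((1 : ℝ) / 3) := ⟨_, rfl⟩
  have hc : 0 < c := hc_def ▸ Real.rpow_pos_of_pos two_pos _
  have hc3 : c ^ 3 = 2 := by
    rw [hc_def, ← Real.rpow_natCast, ← Real.rpow_mul two_pos.le]
    norm_num
  have hc2 : (2 : ℝ) ^ ((2 : ℝ) / 3) = c ^ 2 := by
    rw [hc_def, ← Real.rpow_natCast, ← Real.rpow_mul two_pos.le]
    norm_num
  have hpow (s : ℝ) : s ^ (-6 : ℤ) = ((s ^ 2) ^ 3)⁻¹ := by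
    rw [← pow_mul, _root_.zpow_neg]
    rfl
  rw [← hc_def, hc2, ← inv_one_add_add_sq_pow_three hc3]
  refine IsGreatest.csSup_eq ⟨⟨-c, -c, neg_ne_zero.2 hc.ne', neg_ne_zero.2 hc.ne', ?_⟩, ?_⟩
  · rw [hpow, le_antisymm (sigmaMax3_toffoliCore_neg_sq_le hc hc3)
      (le_sigmaMax3_toffoliCore_sq hc hc3 (neg_ne_zero.2 hc.ne') (neg_ne_zero.2 hc.ne'))]
  · rintro _ ⟨x, y, hx, hy, rfl⟩
    rw [hpow]
    have := le_sigmaMax3_toffoliCore_sq hc hc3 hx hy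
    gcongr
end
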